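/- Let $Q\ge 1$ and $R\in\{0,1\}$ be integers, $N=2(Q+1)-R$, and let $X_1,\dots,X_N$ be finite sets with $k_{i,j}=\bigl|\bigl(\bigcup_{l\in[N]\setminus\{j\}}X_l\bigr)\setminus X_i\bigr|$ for $i\ne j$, satisfying the labeling condition $k_{i,j}\ge k_{j,i}$ for all $1\le i<j\le N$. Define, for $1\le m<n\le N$: $\lambda_{m,n}=k_{m,N}-k_{1,N}+k_{1,N-Q}-k_{N-Q,N}+k_{n,N}$ if $n\le N-Q$; $\lambda_{m,n}=k_{m,N}-k_{1,N}+k_{1,n}$ if $m\le N-Q<n$; and $\lambda_{m,n}=k_{1,m}-k_{1,N}+k_{N-Q,N}-k_{1,N-Q}+k_{1,n}$ if $N-Q<m$. Then $\lambda_{m,n}\ge k_{m,n}$ for all $1\le m<n\le N$. -/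

import Mathlib

/-!
Off the diagonal `k i j = d i - e j`, where `d i` counts the packets that `i` lacks and `e j` the
packets that only `j` holds. Hence `k i j - k j i = w i - w j` with `w = d + e`, and the labeling
condition says that `w` is antitone. Substituting into the three formulas for `λ m n`, with pivot
`p = N - Q`, the excess `λ m n - k m n` is `w n - w p`, `0` and `w p - w m` respectively.
-/

open Finset

section Counting

variable {ι γ : Type*} [DecidableEq ι] [DecidableEq γ] {s : Finset ι} {i j : ι}

/-- The parameter `k i j` for a set `s` of clients, client `l` holding the packets `X l`: the number
of packets that `i` lacks among those held by clients other than `j`. -/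
def missingCard (s : Finset ι) (X : ι → Finset γ) (i j : ι) : ℕ :=
  #((s.erase j).biUnion X \ X i)

/-- The number of packets that client `j` alone holds. -/
def exclusiveCard (s : Finset ι) (X : ι → Finset γ) (j : ι) : ℕ :=
  #(X j \ (s.erase j).biUnion X)

/-- The number of packets that client `i` does not share with another client, either because `i`
lacks them or because nobody else holds them. It is the potential whose differences are
`k i j - k j i`. -/
def unsharedCard (s : Finset ι) (X : ι → Finset γ) (i : ι) : ℕ :=
  #(s.biUnion X \ X i) + exclusiveCard s X i

theorem missingCard_add_exclusiveCard (X : ι → Finset γ) (hi : i ∈ s) (hj : j ∈ s) (hij : i ≠ j) :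
    missingCard s X i j + exclusiveCard s X j = #(s.biUnion X \ X i) := by
  have hXi : X i ⊆ (s.erase j).biUnion X := subset_biUnion_of_mem X (mem_erase.2 ⟨hij, hi⟩)
  have hunion : s.biUnion X = X j ∪ (s.erase j).biUnion X := by
    rw [← biUnion_insert, insert_erase hj]
  have hexcl : exclusiveCard s X j = #(s.biUnion X \ (s.erase j).biUnion X) := by
    rw [hunion, union_sdiff_right, exclusiveCard]
  have hsub : (s.erase j).biUnion X ⊆ s.biUnion X := hunion ▸ subset_union_right
  rw [missingCard, hexcl, card_sdiff_of_subset hXi, card_sdiff_of_subset hsub,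
    card_sdiff_of_subset (hXi.trans hsub)]
  have := card_le_card hXi
  have := card_le_card hsub
  omega

theorem missingCard_eq_sub (X : ι → Finset γ) (hi : i ∈ s) (hj : j ∈ s) (hij : i ≠ j) :
    (missingCard s X i j : ℤ) = #(s.biUnion X \ X i) - exclusiveCard s X j :=
  eq_sub_of_add_eq (mod_cast missingCard_add_exclusiveCard X hi hj hij)

theorem missingCard_le_missingCard_swap_iff (X : ι → Finset γ) (hi : i ∈ s) (hj : j ∈ s)
    (hij : i ≠ j) :
    missingCard s X j i ≤ missingCard s X i j ↔ unsharedCard s X j ≤ unsharedCard s X i := by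
  have hkij := missingCard_add_exclusiveCard X hi hj hij
  have hkji := missingCard_add_exclusiveCard X hj hi hij.symm
  unfold unsharedCard
  omega

end Counting

section Ordered

variable {ι γ : Type*} [LinearOrder ι] [DecidableEq γ] {s : Finset ι} {a p b m n : ι}

/-- The quantity `λ m n` (for `m < n`) attached to the parameters `k`, with the first client
`1`, the pivot `N - Q` and the last client `N` replaced by arbitrary clients `a`, `p` and `b`. -/
def pairBound (k : ι → ι → ℕ) (a p b m n : ι) : ℤ :=
  if n ≤ p then k m b - k a b + k a p - k p b + k n b
  else if m ≤ p then k m b - k a b + k a n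
  else k a m - k a b + k p b - k a p + k a n

theorem pairBound_of_le (X : ι → Finset γ) (ha : a ∈ s) (hp : p ∈ s) (hb : b ∈ s) (hm : m ∈ s)
    (hn : n ∈ s) (hap : a < p) (hpb : p < b) (hmn : m < n) (hnp : n ≤ p) :
    pairBound (missingCard s X) a p b m n =
      missingCard s X m n + (unsharedCard s X n - unsharedCard s X p) := by
  have hnb : n < b := hnp.trans_lt hpb
  rw [pairBound, if_pos hnp, missingCard_eq_sub X hm hb (hmn.trans hnb).ne,
    missingCard_eq_sub X ha hb (hap.trans hpb).ne, missingCard_eq_sub X ha hp hap.ne,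
    missingCard_eq_sub X hp hb hpb.ne, missingCard_eq_sub X hn hb hnb.ne,
    missingCard_eq_sub X hm hn hmn.ne, unsharedCard, unsharedCard]
  push_cast
  ring

theorem pairBound_of_le_of_lt (X : ι → Finset γ) (ha : a ∈ s) (hb : b ∈ s) (hm : m ∈ s)
    (hn : n ∈ s) (hap : a < p) (hpb : p < b) (hmp : m ≤ p) (hpn : p < n) :
    pairBound (missingCard s X) a p b m n = missingCard s X m n := by
  rw [pairBound, if_neg hpn.not_ge, if_pos hmp, missingCard_eq_sub X hm hb (hmp.trans_lt hpb).ne,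
    missingCard_eq_sub X ha hb (hap.trans hpb).ne, missingCard_eq_sub X ha hn (hap.trans hpn).ne,
    missingCard_eq_sub X hm hn (hmp.trans_lt hpn).ne]
  ring

theorem pairBound_of_lt (X : ι → Finset γ) (ha : a ∈ s) (hp : p ∈ s) (hb : b ∈ s) (hm : m ∈ s)
    (hn : n ∈ s) (hap : a < p) (hpb : p < b) (hpm : p < m) (hmn : m < n) :
    pairBound (missingCard s X) a p b m n =
      missingCard s X m n + (unsharedCard s X p - unsharedCard s X m) := by
  have ham : a < m := hap.trans hpm
  rw [pairBound, if_neg (hpm.trans hmn).not_ge, if_neg hpm.not_ge,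
    missingCard_eq_sub X ha hm ham.ne, missingCard_eq_sub X ha hb (hap.trans hpb).ne,
    missingCard_eq_sub X hp hb hpb.ne, missingCard_eq_sub X ha hp hap.ne,
    missingCard_eq_sub X ha hn (ham.trans hmn).ne, missingCard_eq_sub X hm hn hmn.ne,
    unsharedCard, unsharedCard]
  push_cast
  ring

theorem antitoneOn_unsharedCard {X : ι → Finset γ}
    (hlabel : ∀ i ∈ s, ∀ j ∈ s, i < j → missingCard s X j i ≤ missingCard s X i j) :
    AntitoneOn (unsharedCard s X) s := by
  intro i hi j hj hij
  obtain rfl | hlt := hij.eq_or_lt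
  · rfl
  · exact (missingCard_le_missingCard_swap_iff X hi hj hlt.ne).1 (hlabel i hi j hj hlt)

theorem stmt_15_general {X : ι → Finset γ} (ha : a ∈ s) (hp : p ∈ s) (hb : b ∈ s)
    (hap : a < p) (hpb : p < b)
    (hlabel : ∀ i ∈ s, ∀ j ∈ s, i < j → missingCard s X j i ≤ missingCard s X i j)
    (hm : m ∈ s) (hn : n ∈ s) (hmn : m < n) :
    (missingCard s X m n : ℤ) ≤ pairBound (missingCard s X) a p b m n := by
  have hanti := antitoneOn_unsharedCard hlabel
  obtain hnp | hpn := le_or_gt n p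
  · have : unsharedCard s X p ≤ unsharedCard s X n := hanti hn hp hnp
    rw [pairBound_of_le X ha hp hb hm hn hap hpb hmn hnp]
    omega
  obtain hmp | hpm := le_or_gt m p
  · exact (pairBound_of_le_of_lt X ha hb hm hn hap hpb hmp hpn).ge
  · have : unsharedCard s X m ≤ unsharedCard s X p := hanti hp hm hpm.le
    rw [pairBound_of_lt X ha hp hb hm hn hap hpb hpm hmn]
    omega

end Ordered

/-- Lemma 10 of the paper: with `Q ≥ 1`, `R ∈ {0,1}`, `N = 2(Q+1) - R`,
clients `1,…,N` holding finite packet sets `X i`,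
`k i j = |(⋃_{l ∈ [N] \ {j}} X l) \ X i|` for `i ≠ j`, labeled so that `k i j ≥ k j i`
for `1 ≤ i < j ≤ N`, and `λ m n` defined for `1 ≤ m < n ≤ N` by
`λ m n = k m N - k 1 N + k 1 (N-Q) - k (N-Q) N + k n N` if `n ≤ N - Q`,
`λ m n = k m N - k 1 N + k 1 n` if `m ≤ N - Q < n`, and
`λ m n = k 1 m - k 1 N + k (N-Q) N - k 1 (N-Q) + k 1 n` if `N - Q < m`;
then `λ m n ≥ k m n` for all `1 ≤ m < n ≤ N`. -/
theorem stmt_15 {γ : Type*} [DecidableEq γ] (Q R N : ℕ) (hQ : 1 ≤ Q) (hR : R ≤ 1)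
    (hN : N + R = 2 * (Q + 1)) (X : ℕ → Finset γ)
    (k : ℕ → ℕ → ℕ)
    (hk : ∀ i j, k i j = ((((Finset.Icc 1 N).erase j).biUnion X) \ X i).card)
    (hlabel : ∀ i j, 1 ≤ i → i < j → j ≤ N → k j i ≤ k i j)
    (lam : ℕ → ℕ → ℤ)
    (hlam1 : ∀ m n, 1 ≤ m → m < n → n ≤ N - Q →
      lam m n = (k m N : ℤ) - k 1 N + k 1 (N - Q) - k (N - Q) N + k n N)
    (hlam2 : ∀ m n, 1 ≤ m → m ≤ N - Q → N - Q < n → n ≤ N →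
      lam m n = (k m N : ℤ) - k 1 N + k 1 n)
    (hlam3 : ∀ m n, N - Q < m → m < n → n ≤ N →
      lam m n = (k 1 m : ℤ) - k 1 N + k (N - Q) N - k 1 (N - Q) + k 1 n) :
    ∀ m n, 1 ≤ m → m < n → n ≤ N → (k m n : ℤ) ≤ lam m n := by
  intro m n hm hmn hn
  obtain rfl : k = missingCard (Icc 1 N) X := funext₂ hk
  have hlam : lam m n = pairBound (missingCard (Icc 1 N) X) 1 (N - Q) N m n := by
    unfold pairBound
    split_ifs with hnp hmp
    exacts [hlam1 m n hm hmn hnp, hlam2 m n hm hmp (not_le.1 hnp) hn,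
      hlam3 m n (not_le.1 hmp) hmn hn]
  rw [hlam]
  have hpivot : 1 < N - Q ∧ N - Q < N := by omega
  exact stmt_15_general (by grind) (by grind) (by grind) hpivot.1 hpivot.2
    (fun i hi j hj hij ↦ hlabel i j (mem_Icc.1 hi).1 hij (mem_Icc.1 hj).2)
    (by grind) (by grind) hmn
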